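/- Let 1 < q < 2. A linear operator T : ℝ² → ℝ² with operator norm ‖T‖ = 1 from ℓ²_2 to ℓ^q_2 is an extreme point of the closed unit ball of L(ℓ²_2, ℓ^q_2) if and only if either (a) T attains its norm on two linearly independent vectors, or (b) T = x⊗e_i for some Euclidean unit vector x and some i ∈ {1,2}. -/

import Mathlib

/-!
If `T` is norming at two independent vectors, strict convexity of `ℓ^q_2` makes any two contractions
averaging to `T` agree with `T` there (`extreme_of_det`).

For the rest, write `T` in an orthonormal frame `x`, `rot x`, where `x` is a unit vector with
`‖T x‖_q = 1`. If `T x` lies on a coordinate axis, comparing `‖T x + b T (rot x)‖_q ^ q` with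
`(1 + b²) ^ (q / 2)` as `b → 0` forces `T (rot x) = 0`, because `|b| ^ q` dominates `b²` for `q < 2`
(`app_rot_eq_zero`). Hence `T` is `x ⊗ e_i` up to sign, and the same rigidity applied to the
summands of a convex combination shows that every such operator is extreme.

If both coordinates of `u = T x` are nonzero, then `T (rot x) = c t` with `t` tangent to the sphere
at `u`. Suppose `T` is norming only along `x`. The operators `x ↦ u`, `rot x ↦ c' t` remain
contractions for `c'` near `c` (`twoPt_perturb`), so `T` is not extreme. The delicate point is
second-order degeneracy at `x`. Rescaled, the contraction inequality says that
`E |1 + c b X| ^ q ≤ (1 + b²) ^ (q / 2)` for a centred two-valued `X`, and the nondegeneracy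
required is `(q - 1) (E X²) c² < 1`. It follows from the cubic lower bound `rpow_cubic_lower`:
choosing the sign of `r` so that `(q - 2) r³ E X³ ≥ 0` gives
`E |1 + r X| ^ q ≥ 1 + (q / 2) (q - 1) (E X²) r² > (1 + (q - 1) (E X²) r²) ^ (q / 2)`.
-/

noncomputable section

/-- The ℓ^r norm on ℝ². -/
def pnorm (r : ℝ) (z : ℝ × ℝ) : ℝ := (|z.1| ^ r + |z.2| ^ r) ^ (1 / r)

/-- Apply a 2×2 real matrix, viewed as a linear operator ℝ² → ℝ², to a vector. -/
def app (A : Matrix (Fin 2) (Fin 2) ℝ) (z : ℝ × ℝ) : ℝ × ℝ :=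
  (A 0 0 * z.1 + A 0 1 * z.2, A 1 0 * z.1 + A 1 1 * z.2)

/-- Operator norm from ℓ^p_2 to ℓ^q_2. -/
def opNorm (p q : ℝ) (A : Matrix (Fin 2) (Fin 2) ℝ) : ℝ :=
  sSup {c : ℝ | ∃ z : ℝ × ℝ, pnorm p z = 1 ∧ c = pnorm q (app A z)}

/-- Closed unit ball of L(ℓ^p_2, ℓ^q_2). -/
def unitBall (p q : ℝ) : Set (Matrix (Fin 2) (Fin 2) ℝ) := {A | opNorm p q A ≤ 1}

/-- The rank-one operator u ⊗ v : z ↦ (u·z)·v. -/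
def tensor (u v : ℝ × ℝ) : Matrix (Fin 2) (Fin 2) ℝ :=
  !![v.1 * u.1, v.1 * u.2; v.2 * u.1, v.2 * u.2]

/-- Signed power of a vector: (sgn z1 |z1|^r, sgn z2 |z2|^r). -/
def spow (z : ℝ × ℝ) (r : ℝ) : ℝ × ℝ :=
  (Real.sign z.1 * |z.1| ^ r, Real.sign z.2 * |z.2| ^ r)

/-- Rotation: z^o = (−z2, z1). -/
def rot (z : ℝ × ℝ) : ℝ × ℝ := (-z.2, z.1)

section Aux

open Filter Topology Set


/-! ### One-variable inequalities for the two-point function -/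

lemma rpow_tangent_neg {p x : ℝ} (hp : p ≤ 0) (hx : 0 < x) : 1 + p * (x - 1) ≤ x ^ p := by
  rw [Real.rpow_def_of_pos hx]
  nlinarith [Real.add_one_le_exp (Real.log x * p), Real.log_le_sub_one_of_pos hx]

/-- Bernoulli's inequality; the absolute value makes it valid on all of `ℝ`. -/
lemma abs_bernoulli {q : ℝ} (hq : 1 < q) (y : ℝ) : 1 + q * y ≤ |1 + y| ^ q := by
  rcases le_or_gt (-1) y with h | h
  · rw [abs_of_nonneg (by linarith)]
    exact one_add_mul_self_le_rpow_one_add h hq.le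
  · have : 0 ≤ |1 + y| ^ q := by positivity
    nlinarith

/-- The third-order Taylor polynomial of `(1 + y) ^ q` at `0` is a lower bound: the difference is
convex with zero slope at `0`, its second derivative being nonnegative by `rpow_tangent_neg`. This
is where the sign of `(q - 2) (q - 3)`, hence the range of `q`, matters. -/
lemma rpow_cubic_lower {q : ℝ} (hq1 : 1 < q) (hq2 : q < 2) {y : ℝ} (hy : -1 < y) :
    1 + q * y + q * (q - 1) / 2 * y ^ 2 + q * (q - 1) * (q - 2) / 6 * y ^ 3 ≤ (1 + y) ^ q := by
  have hd1 : ∀ x ∈ Ioi (-1 : ℝ), HasDerivAt (fun x : ℝ => (1 + x) ^ q -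
      (1 + q * x + q * (q - 1) / 2 * x ^ 2 + q * (q - 1) * (q - 2) / 6 * x ^ 3))
      (q * (1 + x) ^ (q - 1) - (q + q * (q - 1) * x + q * (q - 1) * (q - 2) / 2 * x ^ 2)) x := by
    intro x hx
    have hx' : (-1 : ℝ) < x := hx
    have h0 : HasDerivAt (fun x : ℝ => 1 + x) 1 x := (hasDerivAt_id x).const_add 1
    have h1 := h0.rpow_const (p := q) (Or.inl (by linarith))
    have h2 := (hasDerivAt_id x).const_mul q
    have h3 := (hasDerivAt_pow 2 x).const_mul (q * (q - 1) / 2)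
    have h4 := (hasDerivAt_pow 3 x).const_mul (q * (q - 1) * (q - 2) / 6)
    refine HasDerivAt.congr_deriv (h1.fun_sub (((h2.const_add 1).fun_add h3).add h4)) ?_
    simp; ring
  have hd2 : ∀ x ∈ Ioi (-1 : ℝ), HasDerivAt (fun x : ℝ => q * (1 + x) ^ (q - 1) -
      (q + q * (q - 1) * x + q * (q - 1) * (q - 2) / 2 * x ^ 2))
      (q * (q - 1) * ((1 + x) ^ (q - 2) - (1 + (q - 2) * ((1 + x) - 1)))) x := by
    intro x hx
    have hx' : (-1 : ℝ) < x := hx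
    have h0 : HasDerivAt (fun x : ℝ => 1 + x) 1 x := (hasDerivAt_id x).const_add 1
    have h1 := (h0.rpow_const (p := q - 1) (Or.inl (by linarith))).const_mul q
    have h2 := (hasDerivAt_id x).const_mul (q * (q - 1))
    have h3 := (hasDerivAt_pow 2 x).const_mul (q * (q - 1) * (q - 2) / 2)
    refine HasDerivAt.congr_deriv (h1.fun_sub ((h2.const_add q).fun_add h3)) ?_
    rw [show q - 1 - 1 = q - 2 by ring]
    simp; ring
  have hconv := convexOn_of_hasDerivWithinAt2_nonneg (convex_Ioi (-1 : ℝ))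
    (fun x hx => (hd1 x hx).continuousAt.continuousWithinAt)
    (fun x hx => (hd1 x (by simpa using hx)).hasDerivWithinAt)
    (fun x hx => (hd2 x (by simpa using hx)).hasDerivWithinAt)
    (fun x hx => by
      have hx' : (-1 : ℝ) < x := by simpa using hx
      have := rpow_tangent_neg (p := q - 2) (x := 1 + x) (by linarith) (by linarith)
      have h2 : 0 < q * (q - 1) := by nlinarith
      exact mul_nonneg h2.le (by linarith))
  have h0 : (0 : ℝ) ∈ Ioi (-1 : ℝ) := by simp
  have hd0 := hd1 0 h0
  simp only [add_zero, Real.one_rpow, mul_one, mul_zero, ne_eq, OfNat.ofNat_ne_zero,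
    not_false_eq_true, zero_pow, sub_self] at hd0
  rcases lt_trichotomy y 0 with h | h | h
  · have := hconv.slope_le_of_hasDerivAt hy h0 h hd0
    rw [slope_def_field, div_le_iff₀ (by linarith)] at this
    simp at this
    linarith
  · subst h; simp
  · have := hconv.le_slope_of_hasDerivAt h0 hy h hd0
    rw [slope_def_field, le_div_iff₀ (by linarith)] at this
    simp at this
    linarith

/-- With `X = -p₂` with probability `p₁` and `X = p₁` with probability `p₂` (so `E X = 0`), the
function `(E |1 + r X| ^ q) ^ (2 / q)` exceeds its second-order Taylor polynomial
`1 + (q - 1) (E X²) r²` for some `r ≠ 0`: choosing the sign of `r` makes the third-moment term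
nonnegative, and the higher-order terms are handled by `rpow_cubic_lower`. -/
lemma two_point_lower {q p₁ p₂ : ℝ} (hq1 : 1 < q) (hq2 : q < 2) (h1 : 0 < p₁) (h2 : 0 < p₂)
    (hs : p₁ + p₂ = 1) :
    ∃ r : ℝ, r ≠ 0 ∧ (1 + (q - 1) * (p₁ * p₂) * r ^ 2) ^ (q / 2) <
      p₁ * |1 - p₂ * r| ^ q + p₂ * |1 + p₁ * r| ^ q := by
  have key : ∀ r : ℝ, r ^ 2 = 1 / 4 → r * (p₁ - p₂) ≤ 0 →
     (1 + (q - 1) * (p₁ * p₂) * r ^ 2) ^ (q / 2) <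
      p₁ * |1 - p₂ * r| ^ q + p₂ * |1 + p₁ * r| ^ q := by
    intro r hr hsgn
    have hr1 : -1 < r ∧ r < 1 := by constructor <;> nlinarith
    have hp12 : 0 < p₁ * p₂ := mul_pos h1 h2
    have hpos1 : 0 < 1 - p₂ * r := by nlinarith
    have hpos2 : 0 < 1 + p₁ * r := by nlinarith
    have e1 := rpow_cubic_lower hq1 hq2 (y := - p₂ * r) (by linarith)
    have e2 := rpow_cubic_lower hq1 hq2 (y := p₁ * r) (by linarith)
    rw [abs_of_pos hpos1, abs_of_pos hpos2]
    rw [show 1 + -p₂ * r = 1 - p₂ * r by ring] at e1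
    have e1' := mul_le_mul_of_nonneg_left e1 h1.le
    have e2' := mul_le_mul_of_nonneg_left e2 h2.le
    have hpp : 0 < (q - 1) * (p₁ * p₂) * r ^ 2 := by
      rw [hr]; have : 0 < q - 1 := by linarith
      positivity
    have e3 := rpow_one_add_lt_one_add_mul_self (s := (q - 1) * (p₁ * p₂) * r ^ 2)
      (by linarith) hpp.ne' (p := q / 2) (by linarith) (by linarith)
    -- The third-moment term: `q - 2 < 0` and `r * (p₁ - p₂) ≤ 0`.
    have e4 : 0 ≤ q * (q - 1) * (q - 2) / 6 * (p₁ * p₂ * r ^ 2 * (r * (p₁ - p₂))) := by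
      have : 0 ≤ q * (q - 1) := by nlinarith
      have : q * (q - 1) * (q - 2) / 6 ≤ 0 := by nlinarith
      refine mul_nonneg_of_nonpos_of_nonpos this ?_
      exact mul_nonpos_of_nonneg_of_nonpos (by positivity) hsgn
    have hp1 : p₁ = 1 - p₂ := by linarith
    have e5 : p₁ * (1 + q * (-p₂ * r) + q * (q - 1) / 2 * (-p₂ * r) ^ 2
        + q * (q - 1) * (q - 2) / 6 * (-p₂ * r) ^ 3) +
      p₂ * (1 + q * (p₁ * r) + q * (q - 1) / 2 * (p₁ * r) ^ 2
        + q * (q - 1) * (q - 2) / 6 * (p₁ * r) ^ 3) =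
      1 + q / 2 * ((q - 1) * (p₁ * p₂) * r ^ 2) +
      q * (q - 1) * (q - 2) / 6 * (p₁ * p₂ * r ^ 2 * (r * (p₁ - p₂))) := by
      subst hp1; ring
    linarith
  rcases le_total p₁ p₂ with h | h
  · exact ⟨1 / 2, by norm_num, key _ (by norm_num) (by linarith)⟩
  · exact ⟨-1 / 2, by norm_num, key _ (by norm_num) (by linarith)⟩

/-- Near `r = 0` the second-order Taylor bound holds with any constant larger than
`(q - 1) p₁ p₂`, by the second-derivative test. -/
lemma two_point_upper {q p₁ p₂ M : ℝ} (hq1 : 1 < q) (hs : p₁ + p₂ = 1)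
    (hM : (q - 1) * (p₁ * p₂) < M) :
    ∀ᶠ r in 𝓝 (0 : ℝ), p₁ * |1 - p₂ * r| ^ q + p₂ * |1 + p₁ * r| ^ q ≤
      (1 + M * r ^ 2) ^ (q / 2) := by
  set g : ℝ → ℝ := fun r => (1 + M * r ^ 2) ^ (q / 2) -
    (p₁ * (1 - p₂ * r) ^ q + p₂ * (1 + p₁ * r) ^ q) with hg
  have ev1 : ∀ᶠ r in 𝓝 (0 : ℝ), 0 < 1 - p₂ * r :=
    ContinuousAt.eventually_lt (f := fun _ => (0 : ℝ)) (by fun_prop) (by fun_prop) (by simp)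
  have ev2 : ∀ᶠ r in 𝓝 (0 : ℝ), 0 < 1 + p₁ * r :=
    ContinuousAt.eventually_lt (f := fun _ => (0 : ℝ)) (by fun_prop) (by fun_prop) (by simp)
  have ev3 : ∀ᶠ r in 𝓝 (0 : ℝ), 0 < 1 + M * r ^ 2 :=
    ContinuousAt.eventually_lt (f := fun _ => (0 : ℝ)) (by fun_prop) (by fun_prop) (by simp)
  set g' : ℝ → ℝ := fun r => q * M * r * (1 + M * r ^ 2) ^ (q / 2 - 1) -
    q * (p₁ * p₂) * ((1 + p₁ * r) ^ (q - 1) - (1 - p₂ * r) ^ (q - 1)) with hg'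
  have hA : ∀ r : ℝ, HasDerivAt (fun r => 1 - p₂ * r) (-p₂) r := fun r => by
    simpa using ((hasDerivAt_id r).const_mul p₂).const_sub 1
  have hB : ∀ r : ℝ, HasDerivAt (fun r => 1 + p₁ * r) p₁ r := fun r => by
    simpa using ((hasDerivAt_id r).const_mul p₁).const_add 1
  have hC : ∀ r : ℝ, HasDerivAt (fun r => 1 + M * r ^ 2) (2 * M * r) r := fun r => by
    refine HasDerivAt.congr_deriv (((hasDerivAt_pow 2 r).const_mul M).const_add 1) ?_
    simp; ring
  have hd : ∀ᶠ r in 𝓝 (0 : ℝ), HasDerivAt g (g' r) r := by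
    filter_upwards [ev1, ev2, ev3] with r r1 r2 r3
    have k1 := ((hA r).rpow_const (p := q) (Or.inl r1.ne')).const_mul p₁
    have k2 := ((hB r).rpow_const (p := q) (Or.inl r2.ne')).const_mul p₂
    have k3 := (hC r).rpow_const (p := q / 2) (Or.inl r3.ne')
    refine HasDerivAt.congr_deriv (k3.fun_sub (k1.fun_add k2)) ?_
    simp only [hg']; ring
  have hd2 : HasDerivAt g' (q * (M - (q - 1) * (p₁ * p₂))) 0 := by
    have k1 := (hA 0).rpow_const (p := q - 1) (Or.inl (by simp))
    have k2 := (hB 0).rpow_const (p := q - 1) (Or.inl (by simp))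
    have k3 := ((hasDerivAt_id (0:ℝ)).const_mul (q * M)).fun_mul
      ((hC 0).rpow_const (p := q / 2 - 1) (Or.inl (by simp)))
    refine HasDerivAt.congr_deriv (k3.fun_sub ((k2.fun_sub k1).const_mul (q * (p₁ * p₂)))) ?_
    simp
    have hp1 : p₁ = 1 - p₂ := by linarith
    subst hp1; ring
  have hmin : IsLocalMin g 0 := by
    have heq : deriv g =ᶠ[𝓝 0] g' := hd.mono fun r hr => hr.deriv
    apply isLocalMin_of_deriv_deriv_pos
    · rw [heq.deriv_eq, hd2.deriv]
      exact mul_pos (by linarith) (by linarith)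
    · rw [heq.self_of_nhds]; simp [hg']
    · exact hd.self_of_nhds.continuousAt
  filter_upwards [hmin, ev1, ev2] with r hr r1 r2
  rw [abs_of_pos r1, abs_of_pos r2]
  have : g 0 = 0 := by simp [hg, hs]
  rw [this] at hr
  simp only [hg] at hr
  linarith

/-- The two-point function `p₁ |a - p₂ r| ^ q + p₂ |a + p₁ r| ^ q`. It is `‖a u + r t‖_q ^ q` for a
vector `u` with nonzero coordinates, `pᵢ = |uᵢ| ^ q`, and `t = (-p₂ u₁, p₁ u₂)`, which is tangent
at `u` to the sphere of `ℓ^q_2` when `p₁ + p₂ = 1`. -/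
def twoPt (q p₁ p₂ a r : ℝ) : ℝ := p₁ * |a - p₂ * r| ^ q + p₂ * |a + p₁ * r| ^ q

lemma twoPt_smul (q p₁ p₂ k a r : ℝ) :
    twoPt q p₁ p₂ (k * a) (k * r) = |k| ^ q * twoPt q p₁ p₂ a r := by
  unfold twoPt
  rw [show k * a - p₂ * (k * r) = k * (a - p₂ * r) by ring,
    show k * a + p₁ * (k * r) = k * (a + p₁ * r) by ring, abs_mul, abs_mul,
    Real.mul_rpow (abs_nonneg _) (abs_nonneg _), Real.mul_rpow (abs_nonneg _) (abs_nonneg _)]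
  ring

lemma sq_add_sq_rpow_smul (q k a b : ℝ) :
    ((k * a) ^ 2 + (k * b) ^ 2) ^ (q / 2) = |k| ^ q * (a ^ 2 + b ^ 2) ^ (q / 2) := by
  rw [show (k * a) ^ 2 + (k * b) ^ 2 = |k| ^ 2 * (a ^ 2 + b ^ 2) by rw [sq_abs]; ring,
    Real.mul_rpow (by positivity) (by positivity), ← Real.rpow_natCast_mul (abs_nonneg _)]
  congr 2
  push_cast; ring

/-- If the contraction inequality for the slope `c` is strict off the axis `b = 0`, it survives a
small change of `c`. Away from the axis this is compactness; near the axis it needs the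
second-order inequality `(q - 1) p₁ p₂ c² < 1` to be strict, which `two_point_lower` provides. -/
lemma twoPt_perturb {q p₁ p₂ c : ℝ} (hq1 : 1 < q) (hq2 : q < 2) (h1 : 0 < p₁) (h2 : 0 < p₂)
    (hs : p₁ + p₂ = 1)
    (hlt : ∀ a b : ℝ, b ≠ 0 → twoPt q p₁ p₂ a (c * b) < (a ^ 2 + b ^ 2) ^ (q / 2)) :
    ∀ᶠ c' in 𝓝 c, ∀ a b : ℝ, twoPt q p₁ p₂ a (c' * b) ≤ (a ^ 2 + b ^ 2) ^ (q / 2) := by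
  have hq0 : 0 < q := by linarith
  -- Equality here is excluded because the second-order Taylor bound fails at some `r ≠ 0`.
  have hL : (q - 1) * (p₁ * p₂) * c ^ 2 < 1 := by
    rcases eq_or_ne c 0 with rfl | hc
    · simp
    obtain ⟨r, hr, hrlt⟩ := two_point_lower hq1 hq2 h1 h2 hs
    have h := hlt 1 (r / c) (div_ne_zero hr hc)
    rw [mul_div_cancel₀ _ hc] at h
    have h3 := hrlt.trans h
    have hL0 : 0 ≤ (q - 1) * (p₁ * p₂) * r ^ 2 := by
      have : 0 < q - 1 := by linarith
      positivity
    rw [Real.rpow_lt_rpow_iff (by linarith) (by positivity) (by linarith)] at h3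
    have h4 : (q - 1) * (p₁ * p₂) * r ^ 2 < r ^ 2 / c ^ 2 := by
      rw [← div_pow]; linarith
    rw [lt_div_iff₀ (by positivity)] at h4
    have : 0 < r ^ 2 := by positivity
    nlinarith
  obtain ⟨M, hML, hMc⟩ : ∃ M, (q - 1) * (p₁ * p₂) < M ∧ M * c ^ 2 < 1 := by
    have ev : ∀ᶠ M in 𝓝[>] ((q - 1) * (p₁ * p₂)), M * c ^ 2 < 1 :=
      nhdsWithin_le_nhds (ContinuousAt.eventually_lt (g := fun _ => (1 : ℝ))
        (by fun_prop) (by fun_prop) hL)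
    obtain ⟨M, hM, hM'⟩ := (ev.and self_mem_nhdsWithin).exists
    exact ⟨M, hM', hM⟩
  have hM0 : 0 < M := lt_trans (mul_pos (by linarith) (mul_pos h1 h2)) hML
  obtain ⟨δ, hδ, hball⟩ := Metric.eventually_nhds_iff.1 (two_point_upper hq1 hs hML)
  -- The part of the unit circle not covered by the local bound; it avoids the axis `b = 0`.
  set K : Set (ℝ × ℝ) := {z | z.1 ^ 2 + z.2 ^ 2 = 1 ∧ δ * |z.1| ≤ (|c| + 1) * |z.2|} with hK
  have hKc : IsCompact K := by
    refine (isCompact_Icc (a := ((-1 : ℝ), (-1 : ℝ))) (b := (1, 1))).of_isClosed_subset ?_ ?_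
    · have hc1 : IsClosed {z : ℝ × ℝ | z.1 ^ 2 + z.2 ^ 2 = 1} :=
        isClosed_eq (by fun_prop) (by fun_prop)
      have hc2 : IsClosed {z : ℝ × ℝ | δ * |z.1| ≤ (|c| + 1) * |z.2|} :=
        isClosed_le (by fun_prop) (by fun_prop)
      exact hc1.inter hc2
    · rintro ⟨a, b⟩ ⟨h, -⟩
      simp only at h
      exact ⟨⟨by nlinarith, by nlinarith⟩, ⟨by nlinarith, by nlinarith⟩⟩
  have hcont : Continuous fun y : ℝ × ℝ × ℝ => twoPt q p₁ p₂ y.2.1 (y.1 * y.2.2) := by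
    unfold twoPt
    refine Continuous.add (continuous_const.mul ?_) (continuous_const.mul ?_) <;>
      exact Continuous.rpow_const (by fun_prop) (fun _ => Or.inr hq0.le)
  have ev1 : ∀ᶠ c' in 𝓝 c, ∀ z ∈ K, twoPt q p₁ p₂ z.1 (c' * z.2) < 1 := by
    refine hKc.eventually_forall_of_forall_eventually
      (P := fun c' z => twoPt q p₁ p₂ z.1 (c' * z.2) < 1) ?_
    rintro ⟨a, b⟩ ⟨hz, hz'⟩
    simp only at hz hz'
    have hb : b ≠ 0 := by
      rintro rfl
      have : |a| ≤ 0 := by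
        simp only [abs_zero, mul_zero] at hz'
        exact nonpos_of_mul_nonpos_right hz' hδ
      simp [abs_nonpos_iff.1 this] at hz
    have h := hlt a b hb
    rw [hz, Real.one_rpow] at h
    exact hcont.continuousAt.eventually_lt (g := fun _ => (1 : ℝ)) continuousAt_const h
  have ev2 : ∀ᶠ c' in 𝓝 c, M * c' ^ 2 < 1 :=
    ContinuousAt.eventually_lt (g := fun _ => (1 : ℝ)) (by fun_prop) (by fun_prop) hMc
  have ev3 : ∀ᶠ c' in 𝓝 c, |c'| < |c| + 1 :=
    ContinuousAt.eventually_lt (g := fun _ => |c| + 1) (by fun_prop) (by fun_prop) (by simp)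
  filter_upwards [ev1, ev2, ev3] with c' hc1 hc2 hc3 a b
  rcases lt_or_ge ((|c| + 1) * |b|) (δ * |a|) with h | h
  · have ha : 0 < |a| := by
      have : 0 ≤ (|c| + 1) * |b| := by positivity
      exact (pos_iff_pos_of_mul_pos (this.trans_lt h)).1 hδ
    have ha' : a ≠ 0 := abs_pos.1 ha
    have hr : dist (c' * b / a) 0 < δ := by
      rw [Real.dist_eq, sub_zero, abs_div, div_lt_iff₀ ha, abs_mul]
      exact (mul_le_mul_of_nonneg_right hc3.le (abs_nonneg _)).trans_lt h
    have h3 : twoPt q p₁ p₂ 1 (c' * b / a) ≤ (1 + M * (c' * b / a) ^ 2) ^ (q / 2) := hball hr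
    have h4 : (1 + M * (c' * b / a) ^ 2) ^ (q / 2) ≤ (1 ^ 2 + (b / a) ^ 2) ^ (q / 2) := by
      apply Real.rpow_le_rpow (by positivity) _ (by positivity)
      have : M * (c' * b / a) ^ 2 = M * c' ^ 2 * (b / a) ^ 2 := by ring
      rw [this]
      nlinarith [sq_nonneg (b / a)]
    have h5 := mul_le_mul_of_nonneg_left (h3.trans h4)
      (Real.rpow_nonneg (abs_nonneg a) q)
    rw [← twoPt_smul, ← sq_add_sq_rpow_smul, mul_one, mul_div_cancel₀ _ ha',
      mul_div_cancel₀ _ ha'] at h5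
    exact h5
  · by_cases hab : a ^ 2 + b ^ 2 = 0
    · have ha : a = 0 := by nlinarith
      have hb : b = 0 := by nlinarith
      subst ha hb
      simp [twoPt, Real.zero_rpow hq0.ne']
      positivity
    · have hpos : 0 < a ^ 2 + b ^ 2 := lt_of_le_of_ne (by positivity) (Ne.symm hab)
      set n := √(a ^ 2 + b ^ 2) with hn
      have hn0 : 0 < n := Real.sqrt_pos.2 hpos
      have hn2 : n ^ 2 = a ^ 2 + b ^ 2 := Real.sq_sqrt hpos.le
      have hz : (a / n) ^ 2 + (b / n) ^ 2 = 1 := by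
        rw [div_pow, div_pow, ← add_div, ← hn2, div_self (by positivity)]
      have hmem : (a / n, b / n) ∈ K := by
        refine ⟨hz, ?_⟩
        simp only [abs_div, abs_of_pos hn0]
        rw [← mul_div_assoc, ← mul_div_assoc]
        exact div_le_div_of_nonneg_right h hn0.le
      have h3 := (hc1 _ hmem).le
      simp only at h3
      have h3' : twoPt q p₁ p₂ (a / n) (c' * (b / n)) ≤
          ((a / n) ^ 2 + (b / n) ^ 2) ^ (q / 2) := by rwa [hz, Real.one_rpow]
      have h5 := mul_le_mul_of_nonneg_left h3' (Real.rpow_nonneg (abs_nonneg n) q)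
      rw [← twoPt_smul, ← sq_add_sq_rpow_smul, mul_div_cancel₀ _ hn0.ne',
        mul_div_cancel₀ _ hn0.ne', mul_left_comm, mul_div_cancel₀ _ hn0.ne'] at h5
      exact h5

/-! ### Strict convexity and first-order rigidity -/

lemma abs_rpow_convex {q α β s t : ℝ} (hq1 : 1 < q) (hα : 0 < α) (hβ : 0 < β)
    (hαβ : α + β = 1) (hst : s ≠ t) :
    |α * s + β * t| ^ q < α * |s| ^ q + β * |t| ^ q := by
  have htri : |α * s + β * t| ≤ α * |s| + β * |t| := by
    refine (abs_add_le _ _).trans ?_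
    rw [abs_mul, abs_mul, abs_of_pos hα, abs_of_pos hβ]
  by_cases h : |s| = |t|
  · have hs : s = - t := (abs_eq_abs.1 h).resolve_left hst
    have ht : 0 < |t| := abs_pos.2 (fun h0 => hst (by simp [hs, h0]))
    have : |α * s + β * t| < |t| := by
      rw [hs, show α * -t + β * t = (β - α) * t by ring, abs_mul]
      have : |β - α| < 1 := by rw [abs_lt]; constructor <;> linarith
      nlinarith
    rw [h, ← add_mul, hαβ, one_mul]
    exact Real.rpow_lt_rpow (abs_nonneg _) this (by linarith)
  · have := (strictConvexOn_rpow hq1).2 (mem_Ici.2 (abs_nonneg s)) (mem_Ici.2 (abs_nonneg t))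
      h hα hβ hαβ
    simp only [smul_eq_mul] at this
    exact (Real.rpow_le_rpow (abs_nonneg _) htri (by linarith)).trans_lt this

lemma abs_rpow_convex_le {q α β : ℝ} (s t : ℝ) (hq1 : 1 < q) (hα : 0 < α) (hβ : 0 < β)
    (hαβ : α + β = 1) :
    |α * s + β * t| ^ q ≤ α * |s| ^ q + β * |t| ^ q := by
  rcases eq_or_ne s t with rfl | h
  · rw [← add_mul, ← add_mul, hαβ, one_mul, one_mul]
  · exact (abs_rpow_convex hq1 hα hβ hαβ h).le

/-- The `q`-th power of the `ℓ^q` norm on `ℝ²`. -/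
def Phi (q : ℝ) (w : ℝ × ℝ) : ℝ := |w.1| ^ q + |w.2| ^ q

/-- Strict convexity of the balls of `ℓ^q_2`. -/
lemma Phi_strict {q α β R : ℝ} {v w : ℝ × ℝ} (hq1 : 1 < q) (hα : 0 < α) (hβ : 0 < β)
    (hαβ : α + β = 1) (hv : Phi q v ≤ R) (hw : Phi q w ≤ R) (h : Phi q (α • v + β • w) = R) :
    v = w := by
  have hR : α * Phi q v + β * Phi q w ≤ R := by
    calc _ ≤ α * R + β * R := by gcongr
      _ = R := by rw [← add_mul, hαβ, one_mul]
  simp only [Phi, Prod.fst_add, Prod.snd_add, Prod.smul_fst, Prod.smul_snd, smul_eq_mul] at *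
  have l1 := abs_rpow_convex_le v.1 w.1 hq1 hα hβ hαβ
  have l2 := abs_rpow_convex_le v.2 w.2 hq1 hα hβ hαβ
  ext
  · by_contra hne
    have := abs_rpow_convex hq1 hα hβ hαβ hne
    linarith
  · by_contra hne
    have := abs_rpow_convex hq1 hα hβ hαβ hne
    linarith

lemma eq_zero_of_forall_mul_le {m : ℝ} (h : ∀ b : ℝ, b * m ≤ b ^ 2 / 2) : m = 0 := by
  have := h m
  nlinarith

lemma one_add_sq_rpow_le {q : ℝ} (hq1 : 1 < q) (hq2 : q < 2) (b : ℝ) :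
    (1 + b ^ 2) ^ (q / 2) ≤ 1 + q * (b ^ 2 / 2) := by
  have := rpow_one_add_le_one_add_mul_self (s := b ^ 2) (by nlinarith [sq_nonneg b])
    (p := q / 2) (by linarith) (by linarith)
  linarith

/-- A contraction sending one frame vector to a coordinate vector kills the orthogonal one: the
first-order term forces `v = 0`, and then `|b w| ^ q = O(b²)` with `q < 2` forces `w = 0`. -/
lemma axis_rigid {q σ v w : ℝ} (hq1 : 1 < q) (hq2 : q < 2) (hσ : |σ| = 1)
    (h : ∀ b : ℝ, |σ + b * v| ^ q + |b * w| ^ q ≤ (1 + b ^ 2) ^ (q / 2)) : v = 0 ∧ w = 0 := by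
  have hq0 : 0 < q := by linarith
  have hσ2 : σ * σ = 1 := by rw [← abs_mul_abs_self, hσ, one_mul]
  have h1 : ∀ b : ℝ, |b * w| ^ q + q * (b * (σ * v)) ≤ q * (b ^ 2 / 2) := by
    intro b
    have e : |σ + b * v| = |1 + b * (σ * v)| := by
      rw [show σ + b * v = σ * (1 + b * (σ * v)) by linear_combination (-b * v) * hσ2,
        abs_mul, hσ, one_mul]
    have h2 := h b
    rw [e] at h2
    linarith [abs_bernoulli hq1 (b * (σ * v)), one_add_sq_rpow_le hq1 hq2 b]
  have hv : σ * v = 0 := eq_zero_of_forall_mul_le fun b => by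
    have := h1 b
    have h3 : 0 ≤ |b * w| ^ q := by positivity
    have h4 : q * (b * (σ * v)) ≤ q * (b ^ 2 / 2) := by linarith
    exact le_of_mul_le_mul_left h4 hq0
  have hv' : v = 0 := by linear_combination σ * hv - v * hσ2
  refine ⟨hv', ?_⟩
  have h5 : ∀ᶠ b in 𝓝[>] (0 : ℝ), |w| ^ q ≤ q / 2 * b ^ (2 - q) := by
    filter_upwards [self_mem_nhdsWithin] with b hb
    have hb : 0 < b := hb
    have := h1 b
    rw [hv, abs_mul, Real.mul_rpow (abs_nonneg _) (abs_nonneg _), abs_of_pos hb] at this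
    rw [Real.rpow_sub hb, ← mul_div_assoc, le_div_iff₀ (by positivity), Real.rpow_two]
    linarith
  have h6 : Tendsto (fun b : ℝ => q / 2 * b ^ (2 - q)) (𝓝[>] 0) (𝓝 0) := by
    have hc : Continuous fun b : ℝ => q / 2 * b ^ (2 - q) :=
      continuous_const.mul (Real.continuous_rpow_const (by linarith))
    have := hc.tendsto 0
    rw [Real.zero_rpow (by linarith), mul_zero] at this
    exact this.mono_left nhdsWithin_le_nhds
  have h7 : |w| ^ q ≤ 0 := ge_of_tendsto h6 h5
  by_contra hw
  have : 0 < |w| ^ q := Real.rpow_pos_of_pos (abs_pos.2 hw) _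
  linarith

/-- First-order condition at a norming vector: here `pᵢ = |uᵢ| ^ q` and `vᵢ = wᵢ / uᵢ`, where `u`
and `w` are the images of a norming vector and of its rotation. -/
lemma tangency {q v₁ v₂ p₁ p₂ : ℝ} (hq1 : 1 < q) (hq2 : q < 2) (h1 : 0 < p₁) (h2 : 0 < p₂)
    (hs : p₁ + p₂ = 1)
    (h : ∀ b : ℝ, p₁ * |1 + b * v₁| ^ q + p₂ * |1 + b * v₂| ^ q ≤ (1 + b ^ 2) ^ (q / 2)) :
    p₁ * v₁ + p₂ * v₂ = 0 := by
  refine eq_zero_of_forall_mul_le fun b => ?_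
  have e1 := mul_le_mul_of_nonneg_left (abs_bernoulli hq1 (b * v₁)) h1.le
  have e2 := mul_le_mul_of_nonneg_left (abs_bernoulli hq1 (b * v₂)) h2.le
  have h4 : q * (b * (p₁ * v₁ + p₂ * v₂)) ≤ q * (b ^ 2 / 2) := by
    linarith [h b, one_add_sq_rpow_le hq1 hq2 b]
  exact le_of_mul_le_mul_left h4 (by linarith)

/-! ### The unit ball in terms of `Phi` and orthonormal frames -/

lemma pnorm_nonneg (r : ℝ) (z : ℝ × ℝ) : 0 ≤ pnorm r z := by unfold pnorm; positivity

lemma pnorm_rpow {q : ℝ} (hq : 0 < q) (z : ℝ × ℝ) : pnorm q z ^ q = Phi q z := by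
  unfold pnorm Phi
  rw [← Real.rpow_mul (by positivity), one_div_mul_cancel hq.ne', Real.rpow_one]

lemma pnorm_two_rpow (q : ℝ) (z : ℝ × ℝ) : pnorm 2 z ^ q = (z.1 ^ 2 + z.2 ^ 2) ^ (q / 2) := by
  unfold pnorm
  rw [← Real.rpow_mul (by positivity), Real.rpow_two, Real.rpow_two, sq_abs, sq_abs]
  congr 1; ring

lemma pnorm_two_eq_one (z : ℝ × ℝ) : pnorm 2 z = 1 ↔ z.1 ^ 2 + z.2 ^ 2 = 1 := by
  have h := pnorm_two_rpow 2 z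
  rw [Real.rpow_two, div_self two_ne_zero, Real.rpow_one] at h
  rw [← h, pow_eq_one_iff_of_nonneg (pnorm_nonneg 2 z) two_ne_zero]

lemma pnorm_eq_iff {q : ℝ} (hq : 0 < q) (w z : ℝ × ℝ) :
    pnorm q w = pnorm 2 z ↔ Phi q w = (z.1 ^ 2 + z.2 ^ 2) ^ (q / 2) := by
  rw [← pnorm_rpow hq, ← pnorm_two_rpow,
    Real.rpow_left_inj (pnorm_nonneg _ _) (pnorm_nonneg _ _) hq.ne']

lemma pnorm_le_one_iff {q : ℝ} (hq : 0 < q) (w : ℝ × ℝ) : pnorm q w ≤ 1 ↔ Phi q w ≤ 1 := by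
  rw [← pnorm_rpow hq, ← Real.rpow_le_rpow_iff (pnorm_nonneg _ _) zero_le_one hq,
    Real.one_rpow]

lemma Phi_smul (q k : ℝ) (w : ℝ × ℝ) : Phi q (k • w) = |k| ^ q * Phi q w := by
  simp only [Phi, Prod.smul_fst, Prod.smul_snd, smul_eq_mul, abs_mul]
  rw [Real.mul_rpow (abs_nonneg _) (abs_nonneg _), Real.mul_rpow (abs_nonneg _) (abs_nonneg _)]
  ring

lemma app_smul (A : Matrix (Fin 2) (Fin 2) ℝ) (k : ℝ) (z : ℝ × ℝ) :
    app A (k • z) = k • app A z := by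
  ext <;> simp [app] <;> ring

lemma app_add (A : Matrix (Fin 2) (Fin 2) ℝ) (z w : ℝ × ℝ) :
    app A (z + w) = app A z + app A w := by
  ext <;> simp [app] <;> ring

lemma app_comb (A B : Matrix (Fin 2) (Fin 2) ℝ) (α β : ℝ) (z : ℝ × ℝ) :
    app (α • A + β • B) z = α • app A z + β • app B z := by
  ext <;> simp [app] <;> ring

lemma rpow_eq_one_abs {q : ℝ} (hq : 0 < q) {t : ℝ} : |t| ^ q = 1 ↔ |t| = 1 := by
  rw [← Real.rpow_left_inj (abs_nonneg t) zero_le_one hq.ne', Real.one_rpow]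

lemma isCompact_circle : IsCompact {z : ℝ × ℝ | pnorm 2 z = 1} := by
  refine (isCompact_Icc (a := ((-1 : ℝ), (-1 : ℝ))) (b := (1, 1))).of_isClosed_subset ?_ ?_
  · simp only [pnorm_two_eq_one]
    exact isClosed_eq (by fun_prop) (by fun_prop)
  · rintro ⟨a, b⟩ h
    rw [mem_ofPred_eq, pnorm_two_eq_one] at h
    simp only at h
    exact ⟨⟨by nlinarith, by nlinarith⟩, ⟨by nlinarith, by nlinarith⟩⟩

lemma circle_nonempty : {z : ℝ × ℝ | pnorm 2 z = 1}.Nonempty :=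
  ⟨(1, 0), by rw [mem_ofPred_eq, pnorm_two_eq_one]; norm_num⟩

lemma continuous_pnorm_app {q : ℝ} (hq : 0 < q) (A : Matrix (Fin 2) (Fin 2) ℝ) :
    Continuous fun z => pnorm q (app A z) := by
  unfold pnorm app
  refine Continuous.rpow_const (Continuous.add ?_ ?_) (fun _ => Or.inr (by positivity)) <;>
    exact Continuous.rpow_const (by fun_prop) (fun _ => Or.inr hq.le)

lemma opNorm_eq (q : ℝ) (A : Matrix (Fin 2) (Fin 2) ℝ) :
    opNorm 2 q A = sSup ((fun z => pnorm q (app A z)) '' {z : ℝ × ℝ | pnorm 2 z = 1}) := by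
  unfold opNorm
  congr 1
  ext c
  simp only [mem_ofPred_eq, mem_image, eq_comm]

/-- The supremum in `opNorm` is over a bounded nonempty set, so it carries no junk value. -/
lemma mem_unitBall_iff {q : ℝ} (hq : 0 < q) (A : Matrix (Fin 2) (Fin 2) ℝ) :
    A ∈ unitBall 2 q ↔ ∀ z : ℝ × ℝ, Phi q (app A z) ≤ (z.1 ^ 2 + z.2 ^ 2) ^ (q / 2) := by
  rw [unitBall, mem_ofPred_eq, opNorm_eq]
  have hcomp := isCompact_circle.image (continuous_pnorm_app hq A)
  constructor
  · intro h z
    have h1 : ∀ z : ℝ × ℝ, z.1 ^ 2 + z.2 ^ 2 = 1 → Phi q (app A z) ≤ 1 := by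
      intro z hz
      rw [← pnorm_le_one_iff hq]
      exact (le_csSup hcomp.bddAbove
        (mem_image_of_mem _ ((pnorm_two_eq_one z).2 hz))).trans h
    obtain ⟨a, b⟩ := z
    by_cases hab : a ^ 2 + b ^ 2 = 0
    · have ha : a = 0 := by nlinarith
      have hb : b = 0 := by nlinarith
      subst ha hb
      simp [app, Phi, Real.zero_rpow hq.ne']
      positivity
    · have hpos : 0 < a ^ 2 + b ^ 2 := lt_of_le_of_ne (by positivity) (Ne.symm hab)
      set n := √(a ^ 2 + b ^ 2) with hn
      have hn0 : 0 < n := Real.sqrt_pos.2 hpos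
      have hn2 : n ^ 2 = a ^ 2 + b ^ 2 := Real.sq_sqrt hpos.le
      have hz : (a / n) ^ 2 + (b / n) ^ 2 = 1 := by
        rw [div_pow, div_pow, ← add_div, ← hn2, div_self (by positivity)]
      have h3 : Phi q (app A (a / n, b / n)) ≤ ((a / n) ^ 2 + (b / n) ^ 2) ^ (q / 2) := by
        rw [hz, Real.one_rpow]; exact h1 _ hz
      have h5 := mul_le_mul_of_nonneg_left h3 (Real.rpow_nonneg (abs_nonneg n) q)
      rw [← Phi_smul, ← app_smul, ← sq_add_sq_rpow_smul, mul_div_cancel₀ _ hn0.ne',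
        mul_div_cancel₀ _ hn0.ne'] at h5
      rw [Prod.smul_mk, smul_eq_mul, smul_eq_mul, mul_div_cancel₀ _ hn0.ne',
        mul_div_cancel₀ _ hn0.ne'] at h5
      exact h5
  · intro h
    refine csSup_le (circle_nonempty.image _) ?_
    rintro _ ⟨z, hz, rfl⟩
    have := h z
    rw [(pnorm_two_eq_one z).1 hz, Real.one_rpow] at this
    exact (pnorm_le_one_iff hq _).2 this

lemma exists_norm_attained {q : ℝ} (hq : 0 < q) (A : Matrix (Fin 2) (Fin 2) ℝ)
    (hA : opNorm 2 q A = 1) : ∃ x : ℝ × ℝ, x.1 ^ 2 + x.2 ^ 2 = 1 ∧ Phi q (app A x) = 1 := by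
  have h := (isCompact_circle.image (continuous_pnorm_app hq A)).sSup_mem
    (circle_nonempty.image _)
  rw [← opNorm_eq, hA] at h
  obtain ⟨x, hx, hx'⟩ := h
  refine ⟨x, (pnorm_two_eq_one x).1 hx, ?_⟩
  simp only at hx'
  rw [← pnorm_rpow hq, hx', Real.one_rpow]

lemma matrix_ext {A B : Matrix (Fin 2) (Fin 2) ℝ} {z w : ℝ × ℝ}
    (hzw : z.1 * w.2 - z.2 * w.1 ≠ 0) (hz : app A z = app B z) (hw : app A w = app B w) :
    A = B := by
  simp only [app, Prod.mk.injEq] at hz hw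
  have h (i : Fin 2) (h1 : A i 0 * z.1 + A i 1 * z.2 = B i 0 * z.1 + B i 1 * z.2)
      (h2 : A i 0 * w.1 + A i 1 * w.2 = B i 0 * w.1 + B i 1 * w.2) :
      A i 0 = B i 0 ∧ A i 1 = B i 1 := by
    constructor <;> apply mul_right_cancel₀ hzw
    · linear_combination w.2 * h1 - z.2 * h2
    · linear_combination z.1 * h2 - w.1 * h1
  ext i j
  fin_cases i <;> fin_cases j
  · exact (h 0 hz.1 hw.1).1
  · exact (h 0 hz.1 hw.1).2
  · exact (h 1 hz.2 hw.2).1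
  · exact (h 1 hz.2 hw.2).2

lemma linearIndependent_iff_det (z w : ℝ × ℝ) :
    LinearIndependent ℝ ![z, w] ↔ z.1 * w.2 - z.2 * w.1 ≠ 0 := by
  rw [LinearIndependent.pair_iff]
  constructor
  · intro h hd
    have h1 := h w.2 (-z.2) (by ext <;> simp <;> linarith)
    have h2 := h w.1 (-z.1) (by ext <;> simp <;> linarith)
    have := h 1 0 (by ext <;> simp <;> linarith)
    exact one_ne_zero this.1
  · intro hd s t h
    have h1 : s * z.1 + t * w.1 = 0 := congrArg Prod.fst h
    have h2 : s * z.2 + t * w.2 = 0 := congrArg Prod.snd h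
    constructor <;> apply mul_right_cancel₀ hd
    · linear_combination w.2 * h1 - w.1 * h2
    · linear_combination z.1 * h2 - z.2 * h1

lemma rot_det {x : ℝ × ℝ} (hx : x.1 ^ 2 + x.2 ^ 2 = 1) :
    x.1 * (rot x).2 - x.2 * (rot x).1 ≠ 0 := by
  have : x.1 * (rot x).2 - x.2 * (rot x).1 = 1 := by simp only [rot]; linarith
  rw [this]; exact one_ne_zero

lemma sq_add_sq_frame {x : ℝ × ℝ} (hx : x.1 ^ 2 + x.2 ^ 2 = 1) (a b : ℝ) :
    (a • x + b • rot x).1 ^ 2 + (a • x + b • rot x).2 ^ 2 = a ^ 2 + b ^ 2 := by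
  simp only [rot, Prod.fst_add, Prod.snd_add, Prod.smul_fst, Prod.smul_snd, smul_eq_mul]
  linear_combination (a ^ 2 + b ^ 2) * hx

lemma eq_frame {x : ℝ × ℝ} (hx : x.1 ^ 2 + x.2 ^ 2 = 1) (z : ℝ × ℝ) :
    z = (z.1 * x.1 + z.2 * x.2) • x + (z.2 * x.1 - z.1 * x.2) • rot x := by
  ext <;> simp only [rot, Prod.fst_add, Prod.snd_add, Prod.smul_fst, Prod.smul_snd, smul_eq_mul]
  · linear_combination -z.1 * hx
  · linear_combination -z.2 * hx

lemma frame_iff {q : ℝ} (hq : 0 < q) (A : Matrix (Fin 2) (Fin 2) ℝ) {x : ℝ × ℝ}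
    (hx : x.1 ^ 2 + x.2 ^ 2 = 1) :
    A ∈ unitBall 2 q ↔
      ∀ a b : ℝ, Phi q (a • app A x + b • app A (rot x)) ≤ (a ^ 2 + b ^ 2) ^ (q / 2) := by
  rw [mem_unitBall_iff hq]
  constructor
  · intro h a b
    rw [← sq_add_sq_frame hx, ← app_smul, ← app_smul, ← app_add]
    exact h _
  · intro h z
    rw [eq_frame hx z, sq_add_sq_frame hx, app_add, app_smul, app_smul]
    exact h _ _

/-! ### Extreme contractions -/

/-- A contraction sending a unit vector `x` to a norm-one vector on a coordinate axis vanishes on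
`xᗮ`. -/
lemma app_rot_eq_zero {q : ℝ} (hq1 : 1 < q) (hq2 : q < 2) {A : Matrix (Fin 2) (Fin 2) ℝ}
    {x : ℝ × ℝ} (hx : x.1 ^ 2 + x.2 ^ 2 = 1) (hA : A ∈ unitBall 2 q)
    (h1 : Phi q (app A x) = 1) (h0 : (app A x).1 = 0 ∨ (app A x).2 = 0) :
    app A (rot x) = 0 := by
  have hq0 : 0 < q := by linarith
  have hA' := fun b => (frame_iff hq0 A hx).1 hA 1 b
  simp only [one_pow, Phi, Prod.fst_add, Prod.snd_add, Prod.smul_fst, Prod.smul_snd, smul_eq_mul,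
    one_mul] at hA' h1
  rcases h0 with h0 | h0
  · rw [h0, abs_zero, Real.zero_rpow hq0.ne', zero_add,
      rpow_eq_one_abs hq0] at h1
    have := axis_rigid hq1 hq2 h1 (v := (app A (rot x)).2) (w := (app A (rot x)).1) fun b => by
      have := hA' b
      rw [h0, zero_add] at this
      linarith
    exact Prod.ext this.2 this.1
  · rw [h0, abs_zero, Real.zero_rpow hq0.ne', add_zero,
      rpow_eq_one_abs hq0] at h1
    have := axis_rigid hq1 hq2 h1 (v := (app A (rot x)).1) (w := (app A (rot x)).2) fun b => by
      have := hA' b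
      rw [h0, zero_add] at this
      linarith
    exact Prod.ext this.1 this.2

lemma tensor_app (u v z : ℝ × ℝ) : app (tensor u v) z = (u.1 * z.1 + u.2 * z.2) • v := by
  ext <;> simp [app, tensor] <;> ring

lemma extreme_of_det {q : ℝ} (hq1 : 1 < q) {T : Matrix (Fin 2) (Fin 2) ℝ}
    (hT : T ∈ unitBall 2 q) {z w : ℝ × ℝ} (hzw : z.1 * w.2 - z.2 * w.1 ≠ 0)
    (hz : Phi q (app T z) = (z.1 ^ 2 + z.2 ^ 2) ^ (q / 2))
    (hw : Phi q (app T w) = (w.1 ^ 2 + w.2 ^ 2) ^ (q / 2)) :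
    T ∈ Set.extremePoints ℝ (unitBall 2 q) := by
  refine ⟨hT, ?_⟩
  rintro A hA B hB ⟨α, β, hα, hβ, hαβ, rfl⟩
  rw [mem_unitBall_iff (by linarith)] at hA hB
  rw [app_comb] at hz hw
  have e1 := Phi_strict hq1 hα hβ hαβ (hA z) (hB z) hz
  have e2 := Phi_strict hq1 hα hβ hαβ (hA w) (hB w) hw
  have := matrix_ext hzw e1 e2
  rw [← this, ← add_smul, hαβ, one_smul]

lemma extreme_of_axis {q : ℝ} (hq1 : 1 < q) (hq2 : q < 2) {T : Matrix (Fin 2) (Fin 2) ℝ}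
    (hT : T ∈ unitBall 2 q) {x : ℝ × ℝ} (hx : x.1 ^ 2 + x.2 ^ 2 = 1)
    (h1 : Phi q (app T x) = 1) (h0 : (app T x).1 = 0 ∨ (app T x).2 = 0) :
    T ∈ Set.extremePoints ℝ (unitBall 2 q) := by
  refine ⟨hT, ?_⟩
  have hTr := app_rot_eq_zero hq1 hq2 hx hT h1 h0
  rintro A hA B hB ⟨α, β, hα, hβ, hαβ, rfl⟩
  have hA' := (mem_unitBall_iff (by linarith) A).1 hA x
  have hB' := (mem_unitBall_iff (by linarith) B).1 hB x
  rw [hx, Real.one_rpow] at hA' hB'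
  have h1' := h1
  rw [app_comb] at h1'
  have e := Phi_strict hq1 hα hβ hαβ hA' hB' h1'
  have e' : app A x = app (α • A + β • B) x := by
    rw [app_comb, ← e, ← add_smul, hαβ, one_smul]
  rw [← e'] at h1 h0
  exact matrix_ext (rot_det hx) e' ((app_rot_eq_zero hq1 hq2 hx hA h1 h0).trans hTr.symm)

lemma eq_tensor_of_axis {q : ℝ} (hq1 : 1 < q) (hq2 : q < 2) {T : Matrix (Fin 2) (Fin 2) ℝ}
    (hT : T ∈ unitBall 2 q) {x : ℝ × ℝ} (hx : x.1 ^ 2 + x.2 ^ 2 = 1)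
    (h1 : Phi q (app T x) = 1) (h0 : (app T x).1 = 0 ∨ (app T x).2 = 0) :
    ∃ x : ℝ × ℝ, pnorm 2 x = 1 ∧
      (T = tensor x ((1 : ℝ), (0 : ℝ)) ∨ T = tensor x ((0 : ℝ), (1 : ℝ))) := by
  have hq0 : 0 < q := by linarith
  have hTr := app_rot_eq_zero hq1 hq2 hx hT h1 h0
  have hunit : ∀ σ : ℝ, |σ| = 1 → pnorm 2 (σ • x) = 1 := fun σ hσ => by
    have : σ ^ 2 = 1 := by rw [← sq_abs, hσ, one_pow]
    rw [pnorm_two_eq_one, Prod.smul_fst, Prod.smul_snd, smul_eq_mul, smul_eq_mul]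
    linear_combination σ ^ 2 * hx + this
  have hort : ∀ σ : ℝ, (σ • x).1 * x.1 + (σ • x).2 * x.2 = σ := fun σ => by
    simp only [Prod.smul_fst, Prod.smul_snd, smul_eq_mul]
    linear_combination σ * hx
  have hort' : ∀ σ : ℝ, (σ • x).1 * (rot x).1 + (σ • x).2 * (rot x).2 = 0 := fun σ => by
    simp only [rot, Prod.smul_fst, Prod.smul_snd, smul_eq_mul]
    ring
  simp only [Phi] at h1
  rcases h0 with h0 | h0
  · rw [h0, abs_zero, Real.zero_rpow hq0.ne', zero_add,
      rpow_eq_one_abs hq0] at h1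
    refine ⟨_, hunit _ h1, Or.inr (matrix_ext (rot_det hx) ?_ ?_)⟩
    · rw [tensor_app, hort]; ext <;> simp [h0]
    · rw [tensor_app, hort', hTr, zero_smul]
  · rw [h0, abs_zero, Real.zero_rpow hq0.ne', add_zero,
      rpow_eq_one_abs hq0] at h1
    refine ⟨_, hunit _ h1, Or.inl (matrix_ext (rot_det hx) ?_ ?_)⟩
    · rw [tensor_app, hort]; ext <;> simp [h0]
    · rw [tensor_app, hort', hTr, zero_smul]

lemma Phi_eq_twoPt (q u₁ u₂ c a b : ℝ) :
    Phi q (a * u₁ + b * (-|u₂| ^ q * c * u₁), a * u₂ + b * (|u₁| ^ q * c * u₂)) =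
      twoPt q (|u₁| ^ q) (|u₂| ^ q) a (c * b) := by
  simp only [Phi, twoPt]
  rw [show a * u₁ + b * (-|u₂| ^ q * c * u₁) = u₁ * (a - |u₂| ^ q * (c * b)) by ring,
    show a * u₂ + b * (|u₁| ^ q * c * u₂) = u₂ * (a + |u₁| ^ q * (c * b)) by ring,
    abs_mul, abs_mul,
    Real.mul_rpow (abs_nonneg _) (abs_nonneg _), Real.mul_rpow (abs_nonneg _) (abs_nonneg _)]

/-- If an extreme `T` sends a norming unit vector `x` to a vector with nonzero coordinates, then it
has a norming vector off the line of `x`. Otherwise `twoPt_perturb` allows moving `T (rot x)` in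
both directions along the tangent at `T x` while keeping `T x` fixed. -/
lemma exists_second_of_extreme {q : ℝ} (hq1 : 1 < q) (hq2 : q < 2)
    {T : Matrix (Fin 2) (Fin 2) ℝ} (hT : T ∈ Set.extremePoints ℝ (unitBall 2 q))
    {x : ℝ × ℝ} (hx : x.1 ^ 2 + x.2 ^ 2 = 1) (h1 : Phi q (app T x) = 1)
    (hu1 : (app T x).1 ≠ 0) (hu2 : (app T x).2 ≠ 0) :
    ∃ a b : ℝ, b ≠ 0 ∧
      Phi q (a • app T x + b • app T (rot x)) = (a ^ 2 + b ^ 2) ^ (q / 2) := by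
  have hq0 : 0 < q := by linarith
  by_contra! hno
  have hball := (frame_iff hq0 T hx).1 hT.1
  obtain ⟨u₁, u₂, hu⟩ : ∃ u₁ u₂, app T x = (u₁, u₂) := ⟨_, _, rfl⟩
  obtain ⟨w₁, w₂, hw⟩ : ∃ w₁ w₂, app T (rot x) = (w₁, w₂) := ⟨_, _, rfl⟩
  rw [hu] at hu1 hu2
  simp only at hu1 hu2
  rw [hu] at h1
  rw [hu, hw] at hball
  simp only [hu, hw] at hno
  set p₁ := |u₁| ^ q with hp1
  set p₂ := |u₂| ^ q with hp2
  have hp1pos : 0 < p₁ := Real.rpow_pos_of_pos (abs_pos.2 hu1) _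
  have hp2pos : 0 < p₂ := Real.rpow_pos_of_pos (abs_pos.2 hu2) _
  have hs : p₁ + p₂ = 1 := h1
  have htan : p₁ * (w₁ / u₁) + p₂ * (w₂ / u₂) = 0 := by
    refine tangency hq1 hq2 hp1pos hp2pos hs fun b => ?_
    have := hball 1 b
    simp only [Phi, one_pow, one_smul, Prod.smul_mk, Prod.mk_add_mk, smul_eq_mul] at this
    rw [hp1, hp2, ← Real.mul_rpow (abs_nonneg _) (abs_nonneg _),
      ← Real.mul_rpow (abs_nonneg _) (abs_nonneg _), ← abs_mul, ← abs_mul]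
    have e1 : u₁ * (1 + b * (w₁ / u₁)) = u₁ + b * w₁ := by field_simp
    have e2 : u₂ * (1 + b * (w₂ / u₂)) = u₂ + b * w₂ := by field_simp
    rw [e1, e2]
    exact this
  set c := w₂ / u₂ - w₁ / u₁ with hc
  have hw1 : w₁ = -p₂ * c * u₁ := by
    have : w₁ / u₁ = -p₂ * c := by rw [hc]; linear_combination htan - (w₁ / u₁) * hs
    rw [← this, div_mul_cancel₀ _ hu1]
  have hw2 : w₂ = p₁ * c * u₂ := by
    have : w₂ / u₂ = p₁ * c := by rw [hc]; linear_combination htan - (w₂ / u₂) * hs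
    rw [← this, div_mul_cancel₀ _ hu2]
  have hPhi : ∀ c' a b : ℝ, Phi q (a • (u₁, u₂) + b • (-p₂ * c' * u₁, p₁ * c' * u₂)) =
      twoPt q p₁ p₂ a (c' * b) := fun c' a b => Phi_eq_twoPt q u₁ u₂ c' a b
  have hev := twoPt_perturb (c := c) hq1 hq2 hp1pos hp2pos hs fun a b hb => by
    rw [← hPhi, ← hw1, ← hw2]
    exact lt_of_le_of_ne (hball a b) (hno a b hb)
  set D := tensor (rot x) (-p₂ * u₁, p₁ * u₂) with hD
  have hDx : app D x = 0 := by
    rw [hD, tensor_app, show (rot x).1 * x.1 + (rot x).2 * x.2 = 0 by simp only [rot]; ring,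
      zero_smul]
  have hDr : app D (rot x) = (-p₂ * u₁, p₁ * u₂) := by
    rw [hD, tensor_app, show (rot x).1 * (rot x).1 + (rot x).2 * (rot x).2 = 1 by
      simp only [rot]; linarith, one_smul]
  have hmem : ∀ s : ℝ, (∀ a b : ℝ, twoPt q p₁ p₂ a ((c + s) * b) ≤ (a ^ 2 + b ^ 2) ^ (q / 2)) →
      (1 : ℝ) • T + s • D ∈ unitBall 2 q := by
    intro s hs'
    rw [frame_iff hq0 _ hx]
    intro a b
    rw [app_comb, app_comb, hDx, hDr, hu, hw]
    convert hs' a b using 1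
    rw [← hPhi, hw1, hw2]
    congr 2
    · simp
    · congr 1; ext <;> simp <;> ring
  obtain ⟨δ, hδ, hδ'⟩ := Metric.eventually_nhds_iff.1 hev
  have hm1 := hmem (δ / 2) (hδ' (by rw [Real.dist_eq, abs_lt]; constructor <;> linarith))
  have hm2 := hmem (-(δ / 2)) (hδ' (by rw [Real.dist_eq, abs_lt]; constructor <;> linarith))
  have heq := hT.2 hm1 hm2 ⟨1 / 2, 1 / 2, by norm_num, by norm_num, by norm_num, by module⟩
  have h3 := congrArg (fun A => (app A (rot x)).1) heq
  simp only [app_comb, hDr, hw, Prod.fst_add, Prod.smul_fst, smul_eq_mul, one_mul] at h3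
  have h4 : δ / 2 * (-p₂ * u₁) = 0 := by linarith
  have : δ / 2 * (-p₂ * u₁) ≠ 0 :=
    mul_ne_zero (by linarith) (mul_ne_zero (by linarith) hu1)
  exact this h4

end Aux

/-- Extreme contractions from ℓ²_2 to ℓ^q_2 for 1 < q < 2. -/
theorem stmt_3 (q : ℝ) (hq1 : 1 < q) (hq2 : q < 2) (T : Matrix (Fin 2) (Fin 2) ℝ)
    (hT : opNorm 2 q T = 1) :
    T ∈ Set.extremePoints ℝ (unitBall 2 q) ↔
      ((∃ z w : ℝ × ℝ, LinearIndependent ℝ ![z, w] ∧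
          pnorm q (app T z) = pnorm 2 z ∧ pnorm q (app T w) = pnorm 2 w) ∨
       (∃ x : ℝ × ℝ, pnorm 2 x = 1 ∧
          (T = tensor x ((1 : ℝ), (0 : ℝ)) ∨ T = tensor x ((0 : ℝ), (1 : ℝ))))) := by
  have hq0 : 0 < q := by linarith
  have hTb : T ∈ unitBall 2 q := hT.le
  constructor
  · intro hext
    obtain ⟨x, hx, h1⟩ := exists_norm_attained hq0 T hT
    by_cases h0 : (app T x).1 = 0 ∨ (app T x).2 = 0
    · exact Or.inr (eq_tensor_of_axis hq1 hq2 hTb hx h1 h0)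
    · push Not at h0
      obtain ⟨a, b, hb, hab⟩ := exists_second_of_extreme hq1 hq2 hext hx h1 h0.1 h0.2
      refine Or.inl ⟨x, a • x + b • rot x, ?_, ?_, ?_⟩
      · rw [linearIndependent_iff_det]
        have : x.1 * (a • x + b • rot x).2 - x.2 * (a • x + b • rot x).1 = b := by
          simp only [rot, Prod.fst_add, Prod.snd_add, Prod.smul_fst, Prod.smul_snd, smul_eq_mul]
          linear_combination b * hx
        rwa [this]
      · rw [pnorm_eq_iff hq0, hx, Real.one_rpow, h1]
      · rw [pnorm_eq_iff hq0, sq_add_sq_frame hx, app_add, app_smul, app_smul, hab]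
  · rintro (⟨z, w, hzw, hz, hw⟩ | ⟨x, hx, hTx⟩)
    · rw [pnorm_eq_iff hq0] at hz hw
      exact extreme_of_det hq1 hTb ((linearIndependent_iff_det z w).1 hzw) hz hw
    · rw [pnorm_two_eq_one] at hx
      have hin : x.1 * x.1 + x.2 * x.2 = 1 := by linarith
      rcases hTx with h | h
      · have e : app T x = (1, 0) := by rw [h, tensor_app, hin, one_smul]
        refine extreme_of_axis hq1 hq2 hTb hx ?_ (Or.inr (by rw [e]))
        rw [e]; simp [Phi, Real.zero_rpow hq0.ne']
      · have e : app T x = (0, 1) := by rw [h, tensor_app, hin, one_smul]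
        refine extreme_of_axis hq1 hq2 hTb hx ?_ (Or.inl (by rw [e]))
        rw [e]; simp [Phi, Real.zero_rpow hq0.ne']
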